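/- Let x > 0 and let S⁻(x,v) be the LDC switch network for x with connector v in which v is an unbounded load. Then there is no feasible switching solution (Lₛ, θ, g, d) of S⁻(x,v) with d(v) > 0. -/

import Mathlib

open scoped BigOperators ENNReal Classical

/-- A Linear DC (LDC) power network on the finite bus type `V`.
`adj a b` states that there is a line between buses `a` and `b` (it is meant to be
symmetric); `cap`/`sus` give the capacity and susceptance of that line; `pmin`/`pmax`
are the minimum/maximum demand, `gmax` is the maximum generation (`⊤` meaning
unbounded) and `cost` is the generation cost. -/
structure LDCNetwork (V : Type*) [Fintype V] where
  adj : V → V → Prop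
  cap : V → V → ℝ
  sus : V → V → ℝ
  pmin : V → ℝ
  pmax : V → ℝ≥0∞
  gmax : V → ℝ≥0∞
  cost : V → ℝ

/-- A candidate switching solution: the set of switched-off lines (as a relation on
buses), the phase angles `theta`, the generation `gen` and the served demand `dem`. -/
structure LDCSolution (V : Type*) [Fintype V] where
  switched : V → V → Prop
  theta : V → ℝ
  gen : V → ℝ
  dem : V → ℝ

/-- Feasibility of a switching solution `S` for the network `N`: switched-off lines are
lines of the network and switching is symmetric; the flow `sus·(θ a - θ b)` of every
non-switched line is within its capacity; the demand and generation bounds hold; and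
Kirchhoff's conservation law holds at every bus. -/
def LDCSolution.IsFeasible {V : Type*} [Fintype V] (S : LDCSolution V)
    (N : LDCNetwork V) : Prop :=
  (∀ a b, S.switched a b → N.adj a b) ∧
  (∀ a b, S.switched a b → S.switched b a) ∧
  (∀ a b, N.adj a b → ¬ S.switched a b →
      |N.sus a b * (S.theta a - S.theta b)| ≤ N.cap a b) ∧
  (∀ v, N.pmin v ≤ S.dem v ∧ 0 ≤ S.dem v ∧ ENNReal.ofReal (S.dem v) ≤ N.pmax v) ∧
  (∀ v, 0 ≤ S.gen v ∧ ENNReal.ofReal (S.gen v) ≤ N.gmax v) ∧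
  (∀ v, (∑ b : V, if N.adj v b ∧ ¬ S.switched v b
          then N.sus v b * (S.theta v - S.theta b) else 0) = S.gen v - S.dem v)

/-- Build an LDC network from a one-directional line specification:
`spec p q = some (c, s)` means that there is a line between buses `p` and `q`
with capacity `c` and susceptance `s`. -/
noncomputable def mkNet {V : Type*} [Fintype V] (spec : V → V → Option (ℝ × ℝ))
    (pmin : V → ℝ) (pmax gmax : V → ℝ≥0∞) (cost : V → ℝ) : LDCNetwork V where
  adj a b := (spec a b).isSome ∨ (spec b a).isSome
  cap a b := ((spec a b).map Prod.fst).getD (((spec b a).map Prod.fst).getD 0)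
  sus a b := ((spec a b).map Prod.snd).getD (((spec b a).map Prod.snd).getD 0)
  pmin := pmin
  pmax := pmax
  gmax := gmax
  cost := cost

/-- Lines of the switch network `S(x,v)`.  Bus `0` is the generator `g`, bus `1` is
the load `l` and bus `2` is the connector `v`: lines `({g,l},2x,1)`, `({g,v},x,1)`
and `({v,l},x,1)`. -/
noncomputable def switchSpec (x : ℝ) : Fin 3 → Fin 3 → Option (ℝ × ℝ) := fun p q =>
  if p = 0 ∧ q = 1 then some (2 * x, 1)
  else if p = 0 ∧ q = 2 then some (x, 1)
  else if p = 2 ∧ q = 1 then some (x, 1)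
  else none

/-- The switch network `S⁻(x,v)` in which the connector `v` (bus `2`) is an unbounded
load: `p⁻(l) = p⁺(l) = 3x`, `g⁺(g) = 3x`, `p⁻(v) = 0`, `p⁺(v) = ⊤`. -/
noncomputable def Sminus (x : ℝ) : LDCNetwork (Fin 3) :=
  mkNet (switchSpec x)
    (fun b => if b = 1 then 3 * x else 0)
    (fun b => if b = 1 then ENNReal.ofReal (3 * x) else if b = 2 then ⊤ else 0)
    (fun b => if b = 0 then ENNReal.ofReal (3 * x) else 0)
    (fun _ => 0)

/-! Lines merely transport power, so summing Kirchhoff's law over all buses shows that total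
generation equals total demand. In `S⁻(x,v)` the fixed load at `l` already demands all of the `3x`
that can be generated, and nothing is left for `v`. -/

namespace LDCNetwork

/-- The line data of a network is symmetric in the two endpoints, i.e. the lines are undirected.
Capacities are left out: conservation of power does not involve them. -/
structure IsUndirected {V : Type*} [Fintype V] (N : LDCNetwork V) : Prop where
  adj_symm : ∀ a b, N.adj a b → N.adj b a
  sus_symm : ∀ a b, N.sus a b = N.sus b a

end LDCNetwork

namespace LDCSolution

variable {V : Type*} [Fintype V] {S : LDCSolution V} {N : LDCNetwork V}

/-- The power flowing from `a` to `b` over the line between them, with the value `0` when there is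
no such line or it is switched off. -/
noncomputable def flow (S : LDCSolution V) (N : LDCNetwork V) (a b : V) : ℝ :=
  if N.adj a b ∧ ¬ S.switched a b then N.sus a b * (S.theta a - S.theta b) else 0

theorem flow_swap (hN : N.IsUndirected) (hswitched : ∀ a b, S.switched a b → S.switched b a)
    (a b : V) : S.flow N b a = -S.flow N a b := by
  have hadj : N.adj b a ↔ N.adj a b := ⟨hN.adj_symm b a, hN.adj_symm a b⟩
  have hsw : S.switched b a ↔ S.switched a b := ⟨hswitched b a, hswitched a b⟩
  simp only [flow, hadj, hsw, hN.sus_symm b a]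
  split_ifs <;> ring

theorem sum_sum_flow_eq_zero (hN : N.IsUndirected)
    (hswitched : ∀ a b, S.switched a b → S.switched b a) : ∑ a, ∑ b, S.flow N a b = 0 := by
  rw [← self_eq_neg]
  calc ∑ a, ∑ b, S.flow N a b = ∑ a, ∑ b, S.flow N b a := Finset.sum_comm
    _ = ∑ a, ∑ b, -S.flow N a b := by
      congr! with a _ b
      exact flow_swap hN hswitched a b
    _ = -∑ a, ∑ b, S.flow N a b := by simp only [Finset.sum_neg_distrib]

namespace IsFeasible

theorem switched_symm (hS : S.IsFeasible N) : ∀ a b, S.switched a b → S.switched b a :=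
  hS.2.1

theorem sum_flow_eq_gen_sub_dem (hS : S.IsFeasible N) (v : V) :
    ∑ b, S.flow N v b = S.gen v - S.dem v :=
  hS.2.2.2.2.2 v

theorem sum_gen_eq_sum_dem (hS : S.IsFeasible N) (hN : N.IsUndirected) :
    ∑ v, S.gen v = ∑ v, S.dem v := by
  rw [← sub_eq_zero, ← Finset.sum_sub_distrib]
  simpa only [hS.sum_flow_eq_gen_sub_dem] using sum_sum_flow_eq_zero hN hS.switched_symm

theorem pmin_le_dem (hS : S.IsFeasible N) (v : V) : N.pmin v ≤ S.dem v :=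
  (hS.2.2.2.1 v).1

theorem gen_nonneg (hS : S.IsFeasible N) (v : V) : 0 ≤ S.gen v :=
  (hS.2.2.2.2.1 v).1

theorem ofReal_gen_le_gmax (hS : S.IsFeasible N) (v : V) :
    ENNReal.ofReal (S.gen v) ≤ N.gmax v :=
  (hS.2.2.2.2.1 v).2

theorem ofReal_sum_gen_le_sum_gmax (hS : S.IsFeasible N) :
    ENNReal.ofReal (∑ v, S.gen v) ≤ ∑ v, N.gmax v := by
  rw [ENNReal.ofReal_sum_of_nonneg fun v _ ↦ hS.gen_nonneg v]
  exact Finset.sum_le_sum fun v _ ↦ hS.ofReal_gen_le_gmax v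

theorem dem_eq_pmin_of_sum_gmax_le (hS : S.IsFeasible N) (hN : N.IsUndirected)
    (hpmin : 0 ≤ ∑ v, N.pmin v) (hgmax : ∑ v, N.gmax v ≤ ENNReal.ofReal (∑ v, N.pmin v)) (v : V) :
    S.dem v = N.pmin v := by
  have hgen : ∑ v, S.gen v ≤ ∑ v, N.pmin v :=
    (ENNReal.ofReal_le_ofReal_iff hpmin).mp (hS.ofReal_sum_gen_le_sum_gmax.trans hgmax)
  have hdem : ∑ v, S.dem v ≤ ∑ v, N.pmin v := (hS.sum_gen_eq_sum_dem hN).symm.trans_le hgen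
  have hle : ∀ v ∈ Finset.univ, N.pmin v ≤ S.dem v := fun v _ ↦ hS.pmin_le_dem v
  have heq : ∑ v, N.pmin v = ∑ v, S.dem v := (Finset.sum_le_sum hle).antisymm hdem
  exact ((Finset.sum_eq_sum_iff_of_le hle).mp heq v (Finset.mem_univ v)).symm

end IsFeasible

end LDCSolution

theorem mkNet_isUndirected {V : Type*} [Fintype V] {spec : V → V → Option (ℝ × ℝ)}
    (hspec : ∀ a b, (spec a b).isSome → spec b a = none)
    (pmin : V → ℝ) (pmax gmax : V → ℝ≥0∞) (cost : V → ℝ) :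
    (mkNet spec pmin pmax gmax cost).IsUndirected where
  adj_symm _ _ := Or.symm
  sus_symm a b := by
    cases hab : spec a b with
    | none => cases hba : spec b a <;> simp [mkNet, hab, hba]
    | some line => simp [mkNet, hab, hspec a b (by simp [hab])]

theorem switchSpec_eq_none_of_isSome_swap (x : ℝ) (a b : Fin 3)
    (hab : (switchSpec x a b).isSome) : switchSpec x b a = none := by
  fin_cases a <;> fin_cases b <;> simp_all [switchSpec]

theorem sminus_isUndirected (x : ℝ) : (Sminus x).IsUndirected :=
  mkNet_isUndirected (switchSpec_eq_none_of_isSome_swap x) _ _ _ _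

theorem sum_pmin_sminus (x : ℝ) : ∑ v, (Sminus x).pmin v = 3 * x := by
  simp [Sminus, mkNet]

theorem sum_gmax_sminus (x : ℝ) : ∑ v, (Sminus x).gmax v = ENNReal.ofReal (3 * x) := by
  simp only [Sminus, mkNet, Finset.sum_ite_eq', Finset.mem_univ, if_true]

/-- In the switch network `S⁻(x,v)` there is no feasible switching
solution in which the connector `v` consumes a positive load. -/
theorem sminus_no_positive_load (x : ℝ) (hx : 0 < x) :
    ¬ ∃ S : LDCSolution (Fin 3), S.IsFeasible (Sminus x) ∧ 0 < S.dem 2 := by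
  rintro ⟨S, hS, hpos⟩
  have hpmin : 0 ≤ ∑ v, (Sminus x).pmin v := by rw [sum_pmin_sminus]; positivity
  have hgmax : ∑ v, (Sminus x).gmax v ≤ ENNReal.ofReal (∑ v, (Sminus x).pmin v) := by
    rw [sum_gmax_sminus, sum_pmin_sminus]
  have hdem : S.dem 2 = (Sminus x).pmin 2 :=
    hS.dem_eq_pmin_of_sum_gmax_le (sminus_isUndirected x) hpmin hgmax 2
  have hpmin_connector : (Sminus x).pmin 2 = 0 := by simp [Sminus, mkNet]
  exact hpos.ne' (hdem.trans hpmin_connector)
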